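/- For every N ≥ 2 there is a constant C_N depending only on N such that: if F(X) = Σ_{i,j=1}^N f_{ij} X_i X_j is a nonsingular integral quadratic form in N variables and Λ ⊆ ℤ^N is a full-rank sublattice containing a nonzero point x with F(x) = 0, then there exist N linearly independent vectors x_1, …, x_N ∈ Λ with F(x_1) = ⋯ = F(x_N) = 0 and |x_1|^{N−1} · |x_2| ⋯ |x_N| ≤ C_N · |F|^{(N−1)²} · det(Λ)^{2(N−1)}. -/

import Mathlib

/-- The sup-norm of an integer vector: `max_i |x_i|`. -/
def supNorm {N : ℕ} (x : Fin N → ℤ) : ℕ := Finset.univ.sup fun i => (x i).natAbs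

/-- Membership in the full-rank sublattice of `ℤ^N` whose ℤ-basis consists of the rows of the
nonsingular integer matrix `B`. -/
def memLattice {N : ℕ} (B : Matrix (Fin N) (Fin N) ℤ) (x : Fin N → ℤ) : Prop :=
  ∃ c : Fin N → ℤ, ∀ j, x j = ∑ i, c i * B i j

/-!
Let `x` be a shortest nonzero isotropic vector of the lattice `Λ`, and let `K ≍ |F|` satisfy
`|F(v)| ≤ K ‖v‖²`. The reflection of `x` in a vector `v ∈ Λ`, scaled by `F(v)`, is an isotropic
vector of `Λ`, and since it depends only on `v` modulo `ℝx` its norm is at most `3 K ‖w‖² ‖x‖`,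
where `w` is the component of `v` orthogonal to `x`. Minimality of `x` therefore forces
`‖w‖² ≥ 1 / (3 K)` for every `v ∈ Λ` outside `ℝx`; if the reflection is a multiple of `x`, this
follows instead from the integrality of `F(v)` or, when `F(v) = 0`, from reducing `v` modulo `x`.

Given a hyperplane containing `x`, apply the Minkowski convex body theorem to a box of half-width
`‖x‖` along `x`, long in the direction normal to the hyperplane, and so thin in the remaining
directions that they cannot account for `‖w‖² ≥ 1 / (3 K)`. The lattice vector `v` so obtained is
off the hyperplane and satisfies `‖w‖² ≪ K ^ (N - 2) (det Λ / ‖x‖)²`. Reflecting `x` in such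
vectors yields, off any hyperplane through `x`, an isotropic `z ∈ Λ` with
`‖x‖ ‖z‖ ≪ K ^ (N - 1) (det Λ)²`. These `z` span together with `x`, and multiplying `N - 1` of the
bounds gives the theorem.
-/

open Module Submodule QuadraticMap MeasureTheory ZLattice
open scoped RealInnerProductSpace

/-! ### Scaled reflections and shortest isotropic vectors -/

section ScaledReflection

variable {R M : Type*} [CommRing R] [AddCommGroup M] [Module R M]

/-- The reflection of `x` in the hyperplane orthogonal to `v` with respect to `Q`, multiplied by
`Q v` so that it also makes sense for isotropic `v` and preserves integrality. -/
def scaledReflection (Q : QuadraticForm R M) (v x : M) : M :=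
  Q v • x - polar Q x v • v

lemma map_scaledReflection (Q : QuadraticForm R M) (v x : M) :
    Q (scaledReflection Q v x) = Q v ^ 2 * Q x := by
  rw [scaledReflection, sub_eq_add_neg, QuadraticMap.map_add Q, ← neg_smul, Q.map_smul, Q.map_smul,
    polar_smul_left, polar_smul_right]
  simp only [smul_eq_mul]
  ring

lemma map_add_smul_of_isotropic {Q : QuadraticForm R M} {x : M} (hx : Q x = 0) (v : M) (t : R) :
    Q (v + t • x) = Q v + t * polar Q x v := by
  rw [QuadraticMap.map_add Q, Q.map_smul, hx, polar_smul_right, polar_comm]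
  simp

lemma polar_add_smul_of_isotropic {Q : QuadraticForm R M} {x : M} (hx : Q x = 0) (v : M) (t : R) :
    polar Q x (v + t • x) = polar Q x v := by
  rw [polar_add_right, polar_smul_right, polar_self, hx, smul_zero, smul_zero, add_zero]

lemma scaledReflection_add_smul_of_isotropic {Q : QuadraticForm R M} {x : M} (hx : Q x = 0)
    (v : M) (t : R) : scaledReflection Q (v + t • x) x = scaledReflection Q v x := by
  simp only [scaledReflection, map_add_smul_of_isotropic hx, polar_add_smul_of_isotropic hx]
  module

lemma scaledReflection_mem {Q : QuadraticForm R M} {L : Submodule ℤ M}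
    (hQL : ∀ v ∈ L, ∃ n : ℤ, Q v = n) {v x : M} (hv : v ∈ L) (hx : x ∈ L) :
    scaledReflection Q v x ∈ L := by
  obtain ⟨m, hm⟩ := hQL v hv
  obtain ⟨n, hn⟩ := hQL x hx
  obtain ⟨k, hk⟩ := hQL (x + v) (add_mem hx hv)
  have hpolar : polar Q x v = ((k - n - m : ℤ) : R) := by simp [polar, hm, hn, hk]
  rw [scaledReflection, hpolar, hm, Int.cast_smul_eq_zsmul, Int.cast_smul_eq_zsmul]
  exact sub_mem (zsmul_mem hx _) (zsmul_mem hv _)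

end ScaledReflection

section BoundedForm

variable {E : Type*} [NormedAddCommGroup E] [InnerProductSpace ℝ E]
  {Q : QuadraticForm ℝ E} {K : ℝ} {x : E}

lemma abs_polar_le (hQK : ∀ v, |Q v| ≤ K * ‖v‖ ^ 2) (u v : E) :
    |polar Q u v| ≤ 2 * K * ‖u‖ * ‖v‖ := by
  have polarization (a b : E) : |polar Q a b| ≤ K * (‖a‖ ^ 2 + ‖b‖ ^ 2) := by
    have hpolar : 2 * polar Q a b = Q (a + b) - Q (a - b) := by
      rw [sub_eq_add_neg a, QuadraticMap.map_add Q a b, QuadraticMap.map_add Q a (-b),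
        polar_neg_right, QuadraticMap.map_neg]
      ring
    have hadd := abs_le.1 (hQK (a + b))
    have hsub := abs_le.1 (hQK (a - b))
    have hpar := parallelogram_law_with_norm ℝ a b
    have hbound : 2 * (K * (‖a‖ ^ 2 + ‖b‖ ^ 2)) = K * ‖a + b‖ ^ 2 + K * ‖a - b‖ ^ 2 := by
      linear_combination -K * hpar
    rw [abs_le]
    constructor <;> linarith
  rcases eq_or_ne u 0 with rfl | hu
  · simp
  rcases eq_or_ne v 0 with rfl | hv
  · simp
  -- Scaling both arguments to the common length `‖u‖ * ‖v‖` makes AM-GM an equality.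
  have hscaled := polarization (‖v‖ • u) (‖u‖ • v)
  rw [polar_smul_left, polar_smul_right, smul_eq_mul, smul_eq_mul, ← mul_assoc, abs_mul,
    abs_of_nonneg (by positivity), norm_smul, norm_smul, norm_norm, norm_norm] at hscaled
  have hpos : 0 < ‖v‖ * ‖u‖ := by positivity
  refine le_of_mul_le_mul_left (hscaled.trans_eq ?_) hpos
  ring

/-- The orthogonal projection onto the hyperplane orthogonal to `x`, as an endomorphism. -/
noncomputable abbrev projPerp (x : E) : E →L[ℝ] E := (ℝ ∙ x)ᗮ.starProjection

lemma exists_projPerp_add_smul (x v : E) : ∃ t : ℝ, projPerp x v + t • x = v := by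
  obtain ⟨t, ht⟩ := mem_span_singleton.1 ((ℝ ∙ x).starProjection_apply_mem v)
  exact ⟨t, by rw [ht, add_comm, starProjection_add_starProjection_orthogonal]⟩

lemma projPerp_self (x : E) : projPerp x x = 0 :=
  starProjection_orthogonalComplement_singleton_eq_zero x

lemma norm_projPerp_add_smul_sq (x v : E) (t : ℝ) :
    ‖projPerp x v + t • x‖ ^ 2 = ‖projPerp x v‖ ^ 2 + t ^ 2 * ‖x‖ ^ 2 := by
  have horth : ⟪projPerp x v, t • x⟫ = 0 :=
    inner_left_of_mem_orthogonal (smul_mem _ t (mem_span_singleton_self x))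
      (starProjection_apply_mem _ v)
  rw [norm_add_sq_real, horth, norm_smul, Real.norm_eq_abs, mul_pow, sq_abs, mul_zero, add_zero]

lemma projPerp_scaledReflection (Q : QuadraticForm ℝ E) (v x : E) :
    projPerp x (scaledReflection Q v x) = -polar Q x v • projPerp x v := by
  rw [scaledReflection, map_sub, map_smul, map_smul, projPerp_self, smul_zero, zero_sub, neg_smul]

lemma norm_scaledReflection_le (hQK : ∀ v, |Q v| ≤ K * ‖v‖ ^ 2) (hx : Q x = 0) (v : E) :
    ‖scaledReflection Q v x‖ ≤ 3 * K * ‖projPerp x v‖ ^ 2 * ‖x‖ := by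
  obtain ⟨t, ht⟩ := exists_projPerp_add_smul x v
  have hreduce : scaledReflection Q v x = scaledReflection Q (projPerp x v) x := by
    rw [← scaledReflection_add_smul_of_isotropic hx (projPerp x v) t, ht]
  set y := projPerp x v
  calc ‖scaledReflection Q v x‖ = ‖Q y • x - polar Q x y • y‖ := by rw [hreduce, scaledReflection]
    _ ≤ |Q y| * ‖x‖ + |polar Q x y| * ‖y‖ := by
      simpa only [norm_smul, Real.norm_eq_abs] using norm_sub_le (Q y • x) (polar Q x y • y)
    _ ≤ K * ‖y‖ ^ 2 * ‖x‖ + 2 * K * ‖x‖ * ‖y‖ * ‖y‖ := by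
      gcongr
      exacts [hQK y, abs_polar_le hQK x y]
    _ = 3 * K * ‖y‖ ^ 2 * ‖x‖ := by ring

lemma abs_map_le_of_polar_eq_zero (hQK : ∀ v, |Q v| ≤ K * ‖v‖ ^ 2) (hx : Q x = 0) {v : E}
    (hxv : polar Q x v = 0) : |Q v| ≤ K * ‖projPerp x v‖ ^ 2 := by
  obtain ⟨t, ht⟩ := exists_projPerp_add_smul x v
  have hpolar : polar Q x (projPerp x v) = 0 := by
    rw [← polar_add_smul_of_isotropic hx _ t, ht, hxv]
  have hreduce : Q v = Q (projPerp x v) := by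
    conv_lhs => rw [← ht, map_add_smul_of_isotropic hx, hpolar, mul_zero, add_zero]
  rw [hreduce]
  exact hQK _

end BoundedForm

section ShortestIsotropic

variable {E : Type*} [NormedAddCommGroup E] [InnerProductSpace ℝ E]
  {Q : QuadraticForm ℝ E} {L : Submodule ℤ E} {K : ℝ} {x v : E}

/-- `x` is a shortest vector among the nonzero isotropic vectors of `Q` in the lattice `L`. -/
structure IsShortestIsotropic (Q : QuadraticForm ℝ E) (L : Submodule ℤ E) (x : E) : Prop where
  mem : x ∈ L
  ne_zero : x ≠ 0
  isotropic : Q x = 0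
  norm_le : ∀ v ∈ L, v ≠ 0 → Q v = 0 → ‖x‖ ≤ ‖v‖

lemma exists_isShortestIsotropic [FiniteDimensional ℝ E] [DiscreteTopology L]
    (h : ∃ v ∈ L, v ≠ 0 ∧ Q v = 0) : ∃ x, IsShortestIsotropic Q L x := by
  obtain ⟨u, huL, hu0, hu⟩ := h
  let S := {v ∈ L | ‖v‖ ≤ ‖u‖ ∧ v ≠ 0 ∧ Q v = 0}
  have hSfin : S.Finite := by
    have : DiscreteTopology L.toAddSubgroup := ‹DiscreteTopology L›
    refine (Metric.finite_isBounded_inter_isClosed DiscreteTopology.isDiscrete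
      Metric.isBounded_closedBall (AddSubgroup.isClosed_of_discrete (H := L.toAddSubgroup))).subset
      (s := Metric.closedBall 0 ‖u‖ ∩ (L.toAddSubgroup : Set E)) ?_
    rintro v ⟨hvL, hvu, -⟩
    exact ⟨by simpa using hvu, hvL⟩
  obtain ⟨x, ⟨hxL, hxu, hx0, hx⟩, hmin⟩ := S.exists_min_image norm hSfin ⟨u, huL, le_rfl, hu0, hu⟩
  refine ⟨x, hxL, hx0, hx, fun v hvL hv0 hv ↦ ?_⟩
  rcases le_total ‖v‖ ‖u‖ with hvu | huv
  · exact hmin v ⟨hvL, hvu, hv0, hv⟩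
  · exact hxu.trans huv

namespace IsShortestIsotropic

lemma projPerp_ne_zero (hx : IsShortestIsotropic Q L x) (hv : v ∈ L) (hv0 : v ≠ 0)
    (hxv : |⟪x, v⟫| < ‖x‖ ^ 2) : projPerp x v ≠ 0 := by
  intro hproj
  obtain ⟨t, ht⟩ := exists_projPerp_add_smul x v
  rw [hproj, zero_add] at ht
  have hxpos : 0 < ‖x‖ := norm_pos_iff.2 hx.ne_zero
  have hle : ‖x‖ ≤ ‖v‖ := hx.norm_le v hv hv0 (by
    rw [← ht, Q.map_smul, hx.isotropic, smul_zero])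
  rw [← ht, norm_smul, Real.norm_eq_abs] at hle
  rw [← ht, real_inner_smul_right, real_inner_self_eq_norm_sq, abs_mul,
    abs_of_nonneg (sq_nonneg ‖x‖)] at hxv
  nlinarith

lemma three_mul_norm_sq_le_of_isotropic (hx : IsShortestIsotropic Q L x) (hv : v ∈ L)
    (hproj : projPerp x v ≠ 0) (hQv : Q v = 0) (hxv : polar Q x v = 0) :
    3 * ‖x‖ ^ 2 ≤ 4 * ‖projPerp x v‖ ^ 2 := by
  -- Compare `x` with `v` minus its nearest multiple of `x`, which is again isotropic.
  obtain ⟨t, ht⟩ := exists_projPerp_add_smul x v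
  have hsub : v - round t • x = projPerp x v + (t - round t) • x := by
    rw [sub_smul, Int.cast_smul_eq_zsmul, ← add_sub_assoc, ht]
  have hisotropic : Q (v - round t • x) = 0 := by
    rw [sub_eq_add_neg, ← neg_smul, ← Int.cast_smul_eq_zsmul ℝ,
      map_add_smul_of_isotropic hx.isotropic, hQv, hxv, mul_zero, add_zero]
  have hne : v - round t • x ≠ 0 := by
    refine ne_of_apply_ne (projPerp x) ?_
    rwa [map_sub, map_zsmul, projPerp_self, smul_zero, sub_zero, map_zero]
  have hle : ‖x‖ ^ 2 ≤ ‖v - round t • x‖ ^ 2 := by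
    gcongr
    exact hx.norm_le _ (sub_mem hv (zsmul_mem hx.mem _)) hne hisotropic
  have hround : (t - round t) ^ 2 ≤ (1 / 2) ^ 2 := sq_le_sq.2 (by
    simpa using abs_sub_round t)
  rw [hsub, norm_projPerp_add_smul_sq] at hle
  nlinarith [mul_le_mul_of_nonneg_right hround (sq_nonneg ‖x‖)]

lemma one_le_mul_norm_projPerp_sq (hx : IsShortestIsotropic Q L x)
    (hQL : ∀ v ∈ L, ∃ n : ℤ, Q v = n) (hQK : ∀ v, |Q v| ≤ K * ‖v‖ ^ 2) (hKx : 1 ≤ K * ‖x‖ ^ 2)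
    (hv : v ∈ L) (hproj : projPerp x v ≠ 0) : 1 ≤ 3 * K * ‖projPerp x v‖ ^ 2 := by
  have hxpos : 0 < ‖x‖ := norm_pos_iff.2 hx.ne_zero
  have hK : 0 < K := pos_of_mul_pos_left (one_pos.trans_le hKx) (sq_nonneg _)
  rcases eq_or_ne (polar Q x v) 0 with hxv | hxv
  · rcases eq_or_ne (Q v) 0 with hQv | hQv
    · have hlong := mul_le_mul_of_nonneg_left
        (hx.three_mul_norm_sq_le_of_isotropic hv hproj hQv hxv) hK.le
      linarith
    · obtain ⟨n, hn⟩ := hQL v hv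
      have hone : 1 ≤ |Q v| := by
        rw [hn] at hQv ⊢
        exact_mod_cast Int.one_le_abs (mod_cast hQv)
      linarith [abs_map_le_of_polar_eq_zero hQK hx.isotropic hxv]
  · have hne : scaledReflection Q v x ≠ 0 := by
      refine ne_of_apply_ne (projPerp x) ?_
      rw [projPerp_scaledReflection, map_zero]
      exact smul_ne_zero (neg_ne_zero.2 hxv) hproj
    have hle := (hx.norm_le _ (scaledReflection_mem hQL hv hx.mem) hne (by
      rw [map_scaledReflection, hx.isotropic, mul_zero])).trans
      (norm_scaledReflection_le hQK hx.isotropic v)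
    exact le_of_mul_le_mul_right (by rwa [one_mul]) hxpos

end IsShortestIsotropic

end ShortestIsotropic

/-! ### Lattice points in boxes -/

lemma prod_update_update_const {ι M : Type*} [Fintype ι] [DecidableEq ι] [CommMonoid M] {i j : ι}
    (hij : i ≠ j) (a b c : M) :
    ∏ k, Function.update (Function.update (fun _ ↦ c) j b) i a k =
      a * b * c ^ (Fintype.card ι - 2) := by
  have hj : j ∈ Finset.univ \ {i} := by simp [hij.symm]
  rw [Finset.prod_update_of_mem (Finset.mem_univ i), Finset.prod_update_of_mem hj,
    Finset.prod_const, Finset.card_sdiff_of_subset (by simpa using hij.symm),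
    Finset.card_sdiff_of_subset (by simp), Finset.card_singleton, Finset.card_singleton,
    Finset.card_univ, mul_assoc, Nat.sub_sub]

section Minkowski

variable {E : Type*} [NormedAddCommGroup E] [InnerProductSpace ℝ E] {ι : Type*}

lemma convex_setOf_abs_inner_lt (b : ι → E) (t : ι → ℝ) :
    Convex ℝ {v : E | ∀ i, |⟪b i, v⟫| < t i} := by
  simp only [abs_lt, Set.ofPred_forall]
  exact convex_iInter fun i ↦
    (convex_Ioo (-t i) (t i)).is_linear_preimage (innerₛₗ ℝ (b i)).isLinear

lemma projPerp_smul {c : ℝ} (hc : c ≠ 0) (x : E) : projPerp (c • x) = projPerp x := by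
  simp only [projPerp, span_singleton_smul_eq hc.isUnit]

variable [Fintype ι]

lemma norm_projPerp_sq_eq_sum_erase [DecidableEq ι] (b : OrthonormalBasis ι ℝ E) (i : ι) (v : E) :
    ‖projPerp (b i) v‖ ^ 2 = ∑ k ∈ Finset.univ.erase i, ⟪b k, v⟫ ^ 2 := by
  have hpythagoras := norm_sq_eq_add_norm_sq_starProjection v (ℝ ∙ b i)
  rw [starProjection_unit_singleton ℝ (b.norm_eq_one i), norm_smul, b.norm_eq_one, mul_one,
    Real.norm_eq_abs, sq_abs, ← b.sum_sq_inner_right,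
    ← Finset.add_sum_erase _ (fun k ↦ ⟪b k, v⟫ ^ 2) (Finset.mem_univ i)] at hpythagoras
  exact (add_left_cancel hpythagoras).symm

variable [FiniteDimensional ℝ E]

lemma exists_orthonormalBasis_extending_pair {e f : E} (he : ‖e‖ = 1) (hf : ‖f‖ = 1)
    (hef : ⟪e, f⟫ = 0) :
    ∃ (u : Finset E) (b : OrthonormalBasis u ℝ E) (i j : u), i ≠ j ∧ b i = e ∧ b j = f := by
  have horth : Orthonormal ℝ ![e, f] := by
    simp [orthonormal_vecCons_iff, he, hf, hef]
  obtain ⟨u, b, hu, hb⟩ := horth.toSubtypeRange.exists_orthonormalBasis_extension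
  refine ⟨u, b, ⟨e, hu ⟨0, rfl⟩⟩, ⟨f, hu ⟨1, rfl⟩⟩, fun h ↦ ?_, by rw [hb], by rw [hb]⟩
  exact zero_ne_one
    (horth.linearIndependent.injective (Subtype.ext_iff.1 h : ![e, f] 0 = ![e, f] 1))

variable [MeasurableSpace E] [BorelSpace E]

lemma volume_setOf_abs_inner_lt (b : OrthonormalBasis ι ℝ E) {t : ι → ℝ} (ht : ∀ i, 0 ≤ t i) :
    volume {v : E | ∀ i, |⟪b i, v⟫| < t i} = ENNReal.ofReal (∏ i, 2 * t i) := by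
  have hpre : {v : E | ∀ i, |⟪b i, v⟫| < t i} =
      (WithLp.ofLp ∘ b.repr) ⁻¹' Set.univ.pi fun i ↦ Set.Ioo (-t i) (t i) := by
    ext v
    simp [abs_lt, b.repr_apply_apply]
  rw [hpre, ((PiLp.volume_preserving_ofLp ι).comp b.measurePreserving_repr).measure_preimage
      (MeasurableSet.univ_pi fun _ ↦ measurableSet_Ioo).nullMeasurableSet, Real.volume_pi_Ioo,
    ENNReal.ofReal_prod_of_nonneg fun i _ ↦ by linarith [ht i]]
  simp only [sub_neg_eq_add, two_mul]

lemma exists_ne_zero_mem_lattice_abs_inner_lt (L : Submodule ℤ E) [DiscreteTopology L]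
    [IsZLattice ℝ L] (b : OrthonormalBasis ι ℝ E) {t : ι → ℝ}
    (ht : ∀ i, 0 < t i) (hcovol : covolume L < ∏ i, t i) :
    ∃ v ∈ L, v ≠ 0 ∧ ∀ i, |⟪b i, v⟫| < t i := by
  let B := (Free.chooseBasis ℤ L).ofZLatticeBasis ℝ
  have hfund : IsAddFundamentalDomain L (ZSpan.fundamentalDomain B) :=
    isAddFundamentalDomain (Free.chooseBasis ℤ L) volume
  have hcovol_eq : volume (ZSpan.fundamentalDomain B) = ENNReal.ofReal (covolume L) := by
    rw [covolume_eq_measure_fundamentalDomain L volume hfund, ofReal_measureReal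
      (ZSpan.fundamentalDomain_isBounded B).measure_lt_top.ne]
  have hvol : volume (ZSpan.fundamentalDomain B) * 2 ^ finrank ℝ E <
      volume {v : E | ∀ i, |⟪b i, v⟫| < t i} := by
    rw [hcovol_eq, volume_setOf_abs_inner_lt b fun i ↦ (ht i).le, Finset.prod_mul_distrib,
      Finset.prod_const, Finset.card_univ, ← finrank_eq_card_basis b.toBasis, mul_comm (2 ^ _),
      ENNReal.ofReal_mul' (by positivity), ENNReal.ofReal_pow zero_le_two, ENNReal.ofReal_ofNat]
    gcongr
    · simp
    · exact (ENNReal.ofReal_lt_ofReal_iff (Finset.prod_pos fun i _ ↦ ht i)).2 hcovol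
  have : Countable L.toAddSubgroup := inferInstanceAs (Countable L)
  obtain ⟨v, hv0, hv⟩ := exists_ne_zero_mem_lattice_of_measure_mul_two_pow_lt_measure
    (L := L.toAddSubgroup) (s := {v : E | ∀ i, |⟪b i, v⟫| < t i}) hfund
    (fun v hv i ↦ by simpa using hv i) (convex_setOf_abs_inner_lt b t) hvol
  exact ⟨v, v.2, by simpa using hv0, hv⟩

lemma exists_ne_zero_mem_lattice_of_covolume_lt (L : Submodule ℤ E) [DiscreteTopology L]
    [IsZLattice ℝ L] {e f : E} (he : ‖e‖ = 1) (hf : ‖f‖ = 1) (hef : ⟪e, f⟫ = 0) {a T μ : ℝ}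
    (ha : 0 < a) (hT : 0 < T) (hμ : 0 < μ) (hcovol : covolume L < a * T * μ ^ (finrank ℝ E - 2)) :
    ∃ v ∈ L, v ≠ 0 ∧ |⟪e, v⟫| < a ∧ |⟪f, v⟫| < T ∧
      ‖projPerp e v‖ ^ 2 ≤ ⟪f, v⟫ ^ 2 + finrank ℝ E * μ ^ 2 := by
  classical
  obtain ⟨u, b, i, j, hij, rfl, rfl⟩ := exists_orthonormalBasis_extending_pair he hf hef
  have hcard : Fintype.card u = finrank ℝ E := (finrank_eq_card_basis b.toBasis).symm
  let t : u → ℝ := Function.update (Function.update (fun _ ↦ μ) j T) i a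
  have ht : ∀ k, 0 < t k := fun k ↦ by
    simp only [t, Function.update_apply]
    split_ifs <;> assumption
  have hprod : ∏ k, t k = a * T * μ ^ (finrank ℝ E - 2) := by
    rw [prod_update_update_const hij, hcard]
  obtain ⟨v, hvL, hv0, hv⟩ := exists_ne_zero_mem_lattice_abs_inner_lt L b ht (hprod ▸ hcovol)
  have hvi : |⟪b i, v⟫| < a := by simpa [t] using hv i
  have hvj : |⟪b j, v⟫| < T := by simpa [t, hij.symm] using hv j
  have hvk : ∀ k ∈ (Finset.univ.erase i).erase j, ⟪b k, v⟫ ^ 2 ≤ μ ^ 2 := fun k hk ↦ by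
    simp only [Finset.mem_erase] at hk
    exact sq_le_sq.2 ((by simpa [t, hk] using (hv k).le : |⟪b k, v⟫| ≤ μ).trans (le_abs_self μ))
  refine ⟨v, hvL, hv0, hvi, hvj, ?_⟩
  rw [norm_projPerp_sq_eq_sum_erase, ← Finset.add_sum_erase _ _ (by simp [hij.symm] : j ∈ _)]
  gcongr
  refine (Finset.sum_le_card_nsmul _ _ _ hvk).trans ?_
  rw [nsmul_eq_mul, ← hcard, ← Finset.card_univ]
  gcongr
  exact (Finset.erase_subset _ _).trans (Finset.erase_subset _ _)

lemma exists_ne_zero_mem_lattice_norm_projPerp_sq_le (L : Submodule ℤ E) [DiscreteTopology L]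
    [IsZLattice ℝ L] {x f : E} (hx : x ≠ 0) (hf : ‖f‖ = 1) (hxf : ⟪x, f⟫ = 0) {δ : ℝ}
    (hδ : 0 < δ) :
    ∃ v ∈ L, v ≠ 0 ∧ |⟪x, v⟫| < ‖x‖ ^ 2 ∧
      ⟪f, v⟫ ^ 2 < 4 * (finrank ℝ E / δ) ^ (finrank ℝ E - 2) * (covolume L / ‖x‖) ^ 2 ∧
      ‖projPerp x v‖ ^ 2 ≤ ⟪f, v⟫ ^ 2 + δ := by
  have hxpos : 0 < ‖x‖ := norm_pos_iff.2 hx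
  have hcovol := covolume_pos L
  have : Nontrivial E := nontrivial_of_ne x 0 hx
  set n := finrank ℝ E
  have hn : 0 < n := finrank_pos
  obtain ⟨μ, hμ, hμδ⟩ : ∃ μ > 0, μ ^ 2 = δ / n :=
    ⟨√(δ / n), by positivity, Real.sq_sqrt (by positivity)⟩
  let T := 2 * covolume L / (‖x‖ * μ ^ (n - 2))
  have hT : ‖x‖ * T * μ ^ (n - 2) = 2 * covolume L := by
    simp only [T]
    field_simp
  have hTsq : T ^ 2 = 4 * (n / δ) ^ (n - 2) * (covolume L / ‖x‖) ^ 2 := by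
    rw [← inv_div, ← hμδ, inv_pow]
    simp only [T]
    field_simp
    ring
  obtain ⟨v, hvL, hv0, hxv, hfv, hv⟩ := exists_ne_zero_mem_lattice_of_covolume_lt L
    (norm_smul_inv_norm (𝕜 := ℝ) hx) hf (by simp [real_inner_smul_left, hxf]) hxpos
    (by positivity : 0 < T) hμ (by linarith)
  refine ⟨v, hvL, hv0, ?_, ?_, ?_⟩
  · rwa [real_inner_smul_left, abs_mul, RCLike.ofReal_real_eq_id, id, abs_inv, abs_norm,
      inv_mul_lt_iff₀ hxpos, ← pow_two] at hxv
  · rw [← hTsq]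
    exact sq_lt_sq.2 (hfv.trans_le (le_abs_self T))
  · rwa [projPerp_smul (by simpa using hx), hμδ, mul_div_cancel₀ _ (by positivity)] at hv

end Minkowski

/-! ### Short isotropic vectors off a hyperplane -/

section OffHyperplane

variable {E : Type*} [NormedAddCommGroup E] [InnerProductSpace ℝ E] {Q : QuadraticForm ℝ E}
  {L : Submodule ℤ E} {K : ℝ} {x : E}

lemma exists_mem_apply_ne_zero_apply_ne_zero {φ ψ : Dual ℝ E} {u v : E} (huL : u ∈ L)
    (hvL : v ∈ L) (hφ : φ u ≠ 0) (hψ : ψ v ≠ 0) {P : E →L[ℝ] E} {S : ℝ} (hu : ‖P u‖ ^ 2 ≤ S)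
    (hv : ‖P v‖ ^ 2 ≤ S) : ∃ y ∈ L, φ y ≠ 0 ∧ ψ y ≠ 0 ∧ ‖P y‖ ^ 2 ≤ 4 * S := by
  have hS : S ≤ 4 * S := by linarith [(sq_nonneg _).trans hu]
  rcases eq_or_ne (ψ u) 0 with hψu | hψu
  · rcases eq_or_ne (φ v) 0 with hφv | hφv
    · refine ⟨u + v, add_mem huL hvL, by simpa [hφv], by simpa [hψu], ?_⟩
      have htriangle : ‖P (u + v)‖ ^ 2 ≤ (‖P u‖ + ‖P v‖) ^ 2 := by
        gcongr
        exact (congrArg norm (map_add P u v)).trans_le (norm_add_le _ _)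
      linarith [add_sq_le (a := ‖P u‖) (b := ‖P v‖)]
    · exact ⟨v, hvL, hφv, hψ, hv.trans hS⟩
  · exact ⟨u, huL, hφ, hψu, hu.trans hS⟩

namespace IsShortestIsotropic

variable [FiniteDimensional ℝ E] [MeasurableSpace E] [BorelSpace E] [DiscreteTopology L]
  [IsZLattice ℝ L]

lemma exists_mem_inner_ne_zero (hx : IsShortestIsotropic Q L x)
    (hQL : ∀ v ∈ L, ∃ n : ℤ, Q v = n) (hQK : ∀ v, |Q v| ≤ K * ‖v‖ ^ 2) (hKx : 1 ≤ K * ‖x‖ ^ 2)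
    {f : E} (hf : ‖f‖ = 1) (hxf : ⟪x, f⟫ = 0) :
    ∃ v ∈ L, ⟪f, v⟫ ≠ 0 ∧ ‖projPerp x v‖ ^ 2 ≤
      8 * (6 * finrank ℝ E * K) ^ (finrank ℝ E - 2) * (covolume L / ‖x‖) ^ 2 := by
  have hK : 0 < K := pos_of_mul_pos_left (one_pos.trans_le hKx) (sq_nonneg _)
  -- `δ` is half of the lower bound for `‖projPerp x v‖ ^ 2` in `one_le_mul_norm_projPerp_sq`.
  obtain ⟨v, hvL, hv0, hxv, hfv, hv⟩ := exists_ne_zero_mem_lattice_norm_projPerp_sq_le L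
    hx.ne_zero hf hxf (δ := (6 * K)⁻¹) (by positivity)
  have hgap := hx.one_le_mul_norm_projPerp_sq hQL hQK hKx hvL (hx.projPerp_ne_zero hvL hv0 hxv)
  have hδ : (6 * K)⁻¹ ≤ ‖projPerp x v‖ ^ 2 / 2 := by
    rw [inv_le_iff_one_le_mul₀ (by positivity)]
    linarith
  refine ⟨v, hvL, fun hfv0 ↦ ?_, ?_⟩
  · rw [hfv0] at hv
    linarith [inv_pos.2 (by positivity : 0 < 6 * K)]
  · rw [div_inv_eq_mul, mul_left_comm, ← mul_assoc] at hfv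
    linarith

lemma exists_mem_dual_apply_ne_zero (hx : IsShortestIsotropic Q L x)
    (hQL : ∀ v ∈ L, ∃ n : ℤ, Q v = n) (hQK : ∀ v, |Q v| ≤ K * ‖v‖ ^ 2) (hKx : 1 ≤ K * ‖x‖ ^ 2)
    {φ : Dual ℝ E} (hφ : φ ≠ 0) (hφx : φ x = 0) :
    ∃ v ∈ L, φ v ≠ 0 ∧ ‖projPerp x v‖ ^ 2 ≤
      8 * (6 * finrank ℝ E * K) ^ (finrank ℝ E - 2) * (covolume L / ‖x‖) ^ 2 := by
  let w := (InnerProductSpace.toDual ℝ E).symm φ.toContinuousLinearMap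
  have hw (v : E) : ⟪w, v⟫ = φ v := InnerProductSpace.toDual_symm_apply
  have hw0 : w ≠ 0 := fun h ↦ hφ (LinearMap.ext fun v ↦ by rw [← hw, h, inner_zero_left]; rfl)
  obtain ⟨v, hvL, hv, hbound⟩ := hx.exists_mem_inner_ne_zero hQL hQK hKx
    (norm_smul_inv_norm (𝕜 := ℝ) hw0)
    (by rw [real_inner_smul_right, real_inner_comm, hw, hφx, mul_zero])
  refine ⟨v, hvL, fun h ↦ hv ?_, hbound⟩
  rw [real_inner_smul_left, hw, h, mul_zero]

lemma exists_isotropic_dual_apply_ne_zero (hx : IsShortestIsotropic Q L x)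
    (hQL : ∀ v ∈ L, ∃ n : ℤ, Q v = n) (hQK : ∀ v, |Q v| ≤ K * ‖v‖ ^ 2) (hKx : 1 ≤ K * ‖x‖ ^ 2)
    (hpolar : Q.polarBilin x ≠ 0) {φ : Dual ℝ E} (hφ : φ ≠ 0) (hφx : φ x = 0) :
    ∃ z ∈ L, Q z = 0 ∧ φ z ≠ 0 ∧ ‖x‖ * ‖z‖ ≤
      96 * K * (6 * finrank ℝ E * K) ^ (finrank ℝ E - 2) * covolume L ^ 2 := by
  have hxpos : 0 < ‖x‖ := norm_pos_iff.2 hx.ne_zero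
  have hK : 0 < K := pos_of_mul_pos_left (one_pos.trans_le hKx) (sq_nonneg _)
  have hpolarx : Q.polarBilin x x = 0 := by
    rw [polarBilin_apply_apply, polar_self, hx.isotropic, smul_zero]
  obtain ⟨u, huL, hu, hPu⟩ := hx.exists_mem_dual_apply_ne_zero hQL hQK hKx hφ hφx
  obtain ⟨v, hvL, hv, hPv⟩ := hx.exists_mem_dual_apply_ne_zero hQL hQK hKx hpolar hpolarx
  obtain ⟨y, hyL, hφy, hpolary, hPy⟩ :=
    exists_mem_apply_ne_zero_apply_ne_zero huL hvL hu hv hPu hPv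
  refine ⟨scaledReflection Q y x, scaledReflection_mem hQL hyL hx.mem, ?_, ?_, ?_⟩
  · rw [map_scaledReflection, hx.isotropic, mul_zero]
  · rw [scaledReflection, map_sub, map_smul, map_smul, hφx, smul_zero, zero_sub]
    exact neg_ne_zero.2 (mul_ne_zero hpolary hφy)
  · calc ‖x‖ * ‖scaledReflection Q y x‖ ≤ ‖x‖ * (3 * K * ‖projPerp x y‖ ^ 2 * ‖x‖) := by
          gcongr
          exact norm_scaledReflection_le hQK hx.isotropic y
      _ ≤ ‖x‖ * (3 * K * (4 * (8 * (6 * finrank ℝ E * K) ^ (finrank ℝ E - 2) *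
            (covolume L / ‖x‖) ^ 2)) * ‖x‖) := by gcongr
      _ = _ := by field_simp; ring

end IsShortestIsotropic

end OffHyperplane

lemma span_insert_eq_top_of_forall_dual {F V : Type*} [Field F] [AddCommGroup V] [Module F V]
    {x : V} {Z : Set V} (hZ : ∀ φ : Dual F V, φ ≠ 0 → φ x = 0 → ∃ z ∈ Z, φ z ≠ 0) :
    span F (insert x Z) = ⊤ := by
  by_contra hspan
  obtain ⟨φ, hφ, hker⟩ := exists_le_ker_of_lt_top _ (lt_top_iff_ne_top.2 hspan)
  have hvanish : ∀ z ∈ insert x Z, φ z = 0 := fun z hz ↦ hker (subset_span hz)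
  obtain ⟨z, hz, hφz⟩ := hZ φ hφ (hvanish x (Set.mem_insert x Z))
  exact hφz (hvanish z (Set.mem_insert_of_mem x hz))

lemma exists_basis_of_span_insert_eq_top {F V ι : Type*} [Field F] [AddCommGroup V] [Module F V]
    [Fintype ι] (hcard : finrank F V = Fintype.card ι) (i₀ : ι) {x : V} (hx : x ≠ 0) {Z : Set V}
    (hZ : span F (insert x Z) = ⊤) : ∃ b : Basis ι F V, b i₀ = x ∧ ∀ i ≠ i₀, b i ∈ Z := by
  classical
  have : FiniteDimensional F V :=
    .of_finrank_pos (hcard ▸ Fintype.card_pos_iff.2 ⟨i₀⟩)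
  have hindep : LinearIndepOn F id {x} := .singleton hx
  have hxZ : {x} ⊆ insert x Z := by simp
  let b := Basis.extendLe hindep hxZ hZ.ge
  let ix : hindep.extend hxZ := ⟨x, hindep.subset_extend hxZ rfl⟩
  let e := b.indexEquiv ((finBasis F V).reindex (Fintype.equivFinOfCardEq hcard.symm).symm)
  let σ := e.trans (Equiv.swap (e ix) i₀)
  have hσ : σ ix = i₀ := Equiv.swap_apply_left _ _
  refine ⟨b.reindex σ, ?_, fun i hi ↦ ?_⟩
  · rw [Basis.reindex_apply, ← hσ, σ.symm_apply_apply, Basis.extendLe_apply_self]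
  · rw [Basis.reindex_apply, Basis.extendLe_apply_self]
    refine (hindep.extend_subset hxZ (σ.symm i).2).resolve_left fun h ↦ hi ?_
    rw [← hσ, ← σ.symm_apply_eq]
    exact Subtype.ext h

namespace IsShortestIsotropic

variable {E : Type*} [NormedAddCommGroup E] [InnerProductSpace ℝ E] [FiniteDimensional ℝ E]
  [MeasurableSpace E] [BorelSpace E] {Q : QuadraticForm ℝ E} {L : Submodule ℤ E}
  [DiscreteTopology L] [IsZLattice ℝ L] {K : ℝ} {x : E}

theorem exists_basis_isotropic (hx : IsShortestIsotropic Q L x)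
    (hQL : ∀ v ∈ L, ∃ n : ℤ, Q v = n) (hQK : ∀ v, |Q v| ≤ K * ‖v‖ ^ 2) (hKx : 1 ≤ K * ‖x‖ ^ 2)
    (hpolar : Q.polarBilin x ≠ 0) {ι : Type*} [Fintype ι] (hcard : finrank ℝ E = Fintype.card ι)
    (i₀ : ι) :
    ∃ b : Basis ι ℝ E, b i₀ = x ∧ (∀ i, b i ∈ L) ∧ (∀ i, Q (b i) = 0) ∧
      ∀ i ≠ i₀, ‖x‖ * ‖b i‖ ≤
        96 * K * (6 * finrank ℝ E * K) ^ (finrank ℝ E - 2) * covolume L ^ 2 := by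
  let Z := {z ∈ L | Q z = 0 ∧ ‖x‖ * ‖z‖ ≤
    96 * K * (6 * finrank ℝ E * K) ^ (finrank ℝ E - 2) * covolume L ^ 2}
  have hspan : span ℝ (insert x Z) = ⊤ := span_insert_eq_top_of_forall_dual fun φ hφ hφx ↦ by
    obtain ⟨z, hzL, hz, hφz, hxz⟩ :=
      hx.exists_isotropic_dual_apply_ne_zero hQL hQK hKx hpolar hφ hφx
    exact ⟨z, ⟨hzL, hz, hxz⟩, hφz⟩
  obtain ⟨b, hbx, hb⟩ := exists_basis_of_span_insert_eq_top hcard i₀ hx.ne_zero hspan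
  refine ⟨b, hbx, fun i ↦ ?_, fun i ↦ ?_, fun i hi ↦ (hb i hi).2.2⟩ <;>
    rcases eq_or_ne i i₀ with rfl | hi
  exacts [hbx ▸ hx.mem, (hb i hi).1, hbx ▸ hx.isotropic, (hb i hi).2.1]

end IsShortestIsotropic

/-! ### Integer matrices as lattices and forms in Euclidean space -/

lemma covolume_span_range_basis {E ι : Type*} [NormedAddCommGroup E] [InnerProductSpace ℝ E]
    [FiniteDimensional ℝ E] [MeasurableSpace E] [BorelSpace E] [Fintype ι] [DecidableEq ι]
    (b : Basis ι ℝ E) (e : OrthonormalBasis ι ℝ E) :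
    covolume (span ℤ (Set.range b)) = |e.toBasis.det b| := by
  rw [covolume_eq_measure_fundamentalDomain _ _ (ZSpan.isAddFundamentalDomain b volume),
    ZSpan.measureReal_fundamentalDomain b volume e.toBasis,
    measureReal_congr (ZSpan.fundamentalDomain_ae_parallelepiped e.toBasis volume), measureReal_def,
    e.coe_toBasis, e.volume_parallelepiped, ENNReal.toReal_one, mul_one]

section IntVector

variable {ι : Type*}

/-- The standard embedding of `ℤ^ι` into the Euclidean space `ℝ^ι`. -/
def intToEuclidean : (ι → ℤ) →ₗ[ℤ] EuclideanSpace ℝ ι :=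
  (WithLp.linearEquiv 2 ℤ (ι → ℝ)).symm ∘ₗ (Int.castAddHom ℝ).toIntLinearMap.compLeft ι

@[simp]
lemma intToEuclidean_apply (x : ι → ℤ) (i : ι) : intToEuclidean x i = x i := rfl

lemma intToEuclidean_injective : Function.Injective (intToEuclidean (ι := ι)) := fun _ _ hxy ↦
  funext fun i ↦ Int.cast_injective (α := ℝ) (congrArg (fun v : EuclideanSpace ℝ ι ↦ v i) hxy)

/-- The lattice spanned by the rows of an integer matrix, as a subgroup of Euclidean space. -/
def rowLattice (B : Matrix ι ι ℤ) : Submodule ℤ (EuclideanSpace ℝ ι) :=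
  span ℤ (Set.range fun i ↦ intToEuclidean (B.row i))

variable [Fintype ι]

lemma natAbs_le_norm_intToEuclidean (x : ι → ℤ) (i : ι) :
    ((x i).natAbs : ℝ) ≤ ‖intToEuclidean x‖ := by
  simpa [Nat.cast_natAbs] using PiLp.norm_apply_le (intToEuclidean x) i

lemma one_le_norm_intToEuclidean {x : ι → ℤ} (hx : x ≠ 0) : 1 ≤ ‖intToEuclidean x‖ := by
  obtain ⟨i, hi⟩ := Function.ne_iff.1 hx
  exact (mod_cast Int.natAbs_pos.2 hi : (1 : ℝ) ≤ (x i).natAbs).trans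
    (natAbs_le_norm_intToEuclidean x i)

lemma supNorm_le_norm_intToEuclidean {N : ℕ} (x : Fin N → ℤ) :
    (supNorm x : ℝ) ≤ ‖intToEuclidean x‖ :=
  (Nat.le_floor_iff (norm_nonneg _)).1 <| Finset.sup_le fun i _ ↦
    Nat.le_floor (natAbs_le_norm_intToEuclidean x i)

lemma mem_rowLattice_iff {N : ℕ} {B : Matrix (Fin N) (Fin N) ℤ} {v : EuclideanSpace ℝ (Fin N)} :
    v ∈ rowLattice B ↔ ∃ x, memLattice B x ∧ intToEuclidean x = v := by
  simp only [rowLattice, mem_span_range_iff_exists_fun, ← map_zsmul, ← map_sum]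
  constructor
  · rintro ⟨c, rfl⟩
    exact ⟨_, ⟨c, fun j ↦ by simp⟩, rfl⟩
  · rintro ⟨x, ⟨c, hc⟩, rfl⟩
    exact ⟨c, congrArg intToEuclidean (funext fun j ↦ by simp [hc])⟩

variable [DecidableEq ι] {B : Matrix ι ι ℤ}

lemma basisFun_det_intToEuclidean (B : Matrix ι ι ℤ) :
    (EuclideanSpace.basisFun ι ℝ).toBasis.det (fun i ↦ intToEuclidean (B.row i)) = B.det := by
  rw [Basis.det_apply, ← Matrix.det_transpose, Int.cast_det]
  rfl

lemma exists_basis_coe_eq_rows (hB : B.det ≠ 0) :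
    ∃ b : Basis ι ℝ (EuclideanSpace ℝ ι), ⇑b = fun i ↦ intToEuclidean (B.row i) := by
  obtain ⟨hindep, hspan⟩ := ((EuclideanSpace.basisFun ι ℝ).toBasis.is_basis_iff_det
    (v := fun i ↦ intToEuclidean (B.row i))).2
    (by rw [basisFun_det_intToEuclidean]; exact (Int.cast_ne_zero.2 hB).isUnit)
  exact ⟨Basis.mk hindep hspan.ge, Basis.coe_mk _ _⟩

lemma discreteTopology_rowLattice (hB : B.det ≠ 0) : DiscreteTopology (rowLattice B) := by
  obtain ⟨b, hb⟩ := exists_basis_coe_eq_rows hB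
  rw [rowLattice, ← hb]
  infer_instance

lemma isZLattice_rowLattice [DiscreteTopology (rowLattice B)] (hB : B.det ≠ 0) :
    IsZLattice ℝ (rowLattice B) where
  span_top := by
    obtain ⟨b, hb⟩ := exists_basis_coe_eq_rows hB
    rw [rowLattice, ← hb]
    exact ZSpan.span_top b

lemma covolume_rowLattice (hB : B.det ≠ 0) : covolume (rowLattice B) = |(B.det : ℝ)| := by
  obtain ⟨b, hb⟩ := exists_basis_coe_eq_rows hB
  rw [rowLattice, ← hb, covolume_span_range_basis b (EuclideanSpace.basisFun ι ℝ), hb,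
    basisFun_det_intToEuclidean]

end IntVector

section MatrixForm

variable {ι : Type*} [Fintype ι] [DecidableEq ι] {A : Matrix ι ι ℝ}

/-- The quadratic form `∑ i, ∑ j, A i j * v i * v j` on Euclidean space. -/
noncomputable def euclideanForm (A : Matrix ι ι ℝ) : QuadraticForm ℝ (EuclideanSpace ℝ ι) :=
  A.toQuadraticForm'.comp (WithLp.linearEquiv 2 ℝ (ι → ℝ)).toLinearMap

lemma euclideanForm_apply (A : Matrix ι ι ℝ) (v : EuclideanSpace ℝ ι) :
    euclideanForm A v = ∑ i, ∑ j, A i j * v i * v j := by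
  simp only [euclideanForm, Matrix.toQuadraticForm', comp_apply, LinearEquiv.coe_coe,
    WithLp.linearEquiv_apply, LinearMap.BilinMap.toQuadraticMap_apply, Matrix.toLinearMap₂'_apply,
    smul_eq_mul]
  refine Finset.sum_congr rfl fun i _ ↦ Finset.sum_congr rfl fun j _ ↦ ?_
  change v i * (v j * A i j) = _
  ring

lemma polar_euclideanForm (hA : A.IsSymm) (v w : EuclideanSpace ℝ ι) :
    polar (euclideanForm A) v w = 2 * (A.mulVec v ⬝ᵥ w) := by
  change polar (LinearMap.BilinMap.toQuadraticMap (Matrix.toLinearMap₂' ℝ A)) v.ofLp w.ofLp = _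
  rw [LinearMap.BilinMap.polar_toQuadraticMap, Matrix.toLinearMap₂'_apply',
    Matrix.toLinearMap₂'_apply', Matrix.dotProduct_mulVec, ← Matrix.mulVec_transpose, hA.eq,
    dotProduct_comm w.ofLp, two_mul]

lemma polarBilin_euclideanForm_ne_zero (hA : A.IsSymm) (hdet : A.det ≠ 0) {v : EuclideanSpace ℝ ι}
    (hv : v ≠ 0) : (euclideanForm A).polarBilin v ≠ 0 := by
  intro hpolar
  have horth (w : ι → ℝ) : A.mulVec v ⬝ᵥ w = 0 := by
    have := LinearMap.congr_fun hpolar (WithLp.toLp 2 w)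
    rwa [polarBilin_apply_apply, polar_euclideanForm hA, LinearMap.zero_apply,
      mul_eq_zero_iff_left two_ne_zero] at this
  have hker := Matrix.eq_zero_of_mulVec_eq_zero hdet (dotProduct_eq_zero _ horth)
  exact hv (WithLp.ofLp_injective 2 hker)

lemma abs_euclideanForm_le {m : ℝ} (hA : ∀ i j, |A i j| ≤ m) (v : EuclideanSpace ℝ ι) :
    |euclideanForm A v| ≤ Fintype.card ι * m * ‖v‖ ^ 2 := by
  rcases isEmpty_or_nonempty ι with _ | ⟨⟨i⟩⟩
  · simp [euclideanForm_apply]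
  have hm : 0 ≤ m := (abs_nonneg _).trans (hA i i)
  calc |euclideanForm A v| ≤ ∑ i, ∑ j, |A i j * v i * v j| := by
        rw [euclideanForm_apply]
        exact (Finset.abs_sum_le_sum_abs _ _).trans
          (Finset.sum_le_sum fun i _ ↦ Finset.abs_sum_le_sum_abs _ _)
    _ ≤ ∑ i, ∑ j, m * |v i| * |v j| := by
        simp only [abs_mul]
        gcongr
        exact hA _ _
    _ = m * (∑ i, |v i|) ^ 2 := by
        rw [pow_two, Finset.sum_mul_sum]
        simp only [Finset.mul_sum, mul_assoc]
    _ ≤ m * (Fintype.card ι * ∑ i, |v i| ^ 2) := by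
        gcongr
        exact sq_sum_le_card_mul_sum_sq
    _ = Fintype.card ι * m * ‖v‖ ^ 2 := by
        simp only [EuclideanSpace.norm_sq_eq, Real.norm_eq_abs]
        ring

end MatrixForm

section Height

variable {ι : Type*} [Fintype ι] {A : Matrix ι ι ℤ}

/-- The largest absolute value of an entry of an integer matrix, the quantity `|F|` attached to a
quadratic form `F` with Gram matrix `A`. -/
def matrixHeight (A : Matrix ι ι ℤ) : ℕ :=
  Finset.univ.sup fun p : ι × ι ↦ (A p.1 p.2).natAbs

lemma natAbs_le_matrixHeight (A : Matrix ι ι ℤ) (i j : ι) : (A i j).natAbs ≤ matrixHeight A :=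
  Finset.le_sup (f := fun p : ι × ι ↦ (A p.1 p.2).natAbs) (Finset.mem_univ (i, j))

lemma matrixHeight_pos [Nonempty ι] [DecidableEq ι] (hA : A.det ≠ 0) : 0 < matrixHeight A := by
  refine Nat.pos_of_ne_zero fun hheight ↦ hA ?_
  have hzero : A = 0 := Matrix.ext fun i j ↦
    Int.natAbs_eq_zero.1 (Nat.le_zero.1 (hheight ▸ natAbs_le_matrixHeight A i j))
  rw [hzero, Matrix.det_zero]

lemma euclideanForm_intToEuclidean [DecidableEq ι] (A : Matrix ι ι ℤ) (x : ι → ℤ) :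
    euclideanForm (A.map (↑)) (intToEuclidean x) = ((∑ i, ∑ j, A i j * x i * x j : ℤ) : ℝ) := by
  simp [euclideanForm_apply]

lemma abs_euclideanForm_map_intCast_le [DecidableEq ι] (A : Matrix ι ι ℤ)
    (v : EuclideanSpace ℝ ι) :
    |euclideanForm (A.map (↑)) v| ≤ Fintype.card ι * matrixHeight A * ‖v‖ ^ 2 :=
  abs_euclideanForm_le (fun i j ↦ by
    rw [Matrix.map_apply, ← Int.cast_abs, ← Nat.cast_natAbs]
    exact_mod_cast natAbs_le_matrixHeight A i j) v

end Height

lemma one_le_norm_of_mem_rowLattice {N : ℕ} {B : Matrix (Fin N) (Fin N) ℤ}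
    {v : EuclideanSpace ℝ (Fin N)} (hvB : v ∈ rowLattice B) (hv : v ≠ 0) : 1 ≤ ‖v‖ := by
  obtain ⟨x, -, rfl⟩ := mem_rowLattice_iff.1 hvB
  exact one_le_norm_intToEuclidean fun hx ↦ hv (by rw [hx, map_zero])

lemma linearIndependent_of_intToEuclidean {ι κ : Type*} {x : κ → ι → ℤ}
    (hx : LinearIndependent ℝ fun k ↦ intToEuclidean (x k)) : LinearIndependent ℤ x :=
  (hx.restrict_scalars (by simpa using Int.cast_injective)).of_comp intToEuclidean

theorem exists_linearIndependent_isotropic {N : ℕ} (i₀ : Fin N) {A B : Matrix (Fin N) (Fin N) ℤ}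
    (hA : A.IsSymm) (hAdet : A.det ≠ 0) (hB : B.det ≠ 0)
    (hex : ∃ x : Fin N → ℤ, memLattice B x ∧ x ≠ 0 ∧ ∑ i, ∑ j, A i j * x i * x j = 0) :
    ∃ x : Fin N → Fin N → ℤ, LinearIndependent ℤ x ∧ (∀ k, memLattice B (x k)) ∧
      (∀ k, ∑ i, ∑ j, A i j * x k i * x k j = 0) ∧
      ∀ k ≠ i₀, (supNorm (x i₀) : ℝ) * supNorm (x k) ≤ 96 * (N * matrixHeight A) *
        (6 * N * (N * matrixHeight A)) ^ (N - 2) * |(B.det : ℝ)| ^ 2 := by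
  have : Nonempty (Fin N) := ⟨i₀⟩
  have := discreteTopology_rowLattice hB
  have := isZLattice_rowLattice hB
  let Q := euclideanForm (A.map ((↑) : ℤ → ℝ))
  have hQ (x : Fin N → ℤ) : Q (intToEuclidean x) = ((∑ i, ∑ j, A i j * x i * x j : ℤ) : ℝ) :=
    euclideanForm_intToEuclidean A x
  obtain ⟨v, hv⟩ : ∃ v, IsShortestIsotropic Q (rowLattice B) v := by
    obtain ⟨x, hxB, hx0, hx⟩ := hex
    exact exists_isShortestIsotropic ⟨intToEuclidean x, mem_rowLattice_iff.2 ⟨x, hxB, rfl⟩,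
      (map_ne_zero_iff _ intToEuclidean_injective).2 hx0, by rw [hQ, hx, Int.cast_zero]⟩
  have hQL : ∀ w ∈ rowLattice B, ∃ n : ℤ, Q w = n := fun w hw ↦ by
    obtain ⟨x, -, rfl⟩ := mem_rowLattice_iff.1 hw
    exact ⟨_, hQ x⟩
  have hQK (w : EuclideanSpace ℝ (Fin N)) : |Q w| ≤ N * matrixHeight A * ‖w‖ ^ 2 := by
    simpa only [Fintype.card_fin] using abs_euclideanForm_map_intCast_le A w
  have hKv : 1 ≤ N * matrixHeight A * ‖v‖ ^ 2 := by
    have hN : (1 : ℝ) ≤ N := mod_cast i₀.pos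
    have hheight : (1 : ℝ) ≤ matrixHeight A := mod_cast matrixHeight_pos hAdet
    have hnorm : 1 ≤ ‖v‖ := one_le_norm_of_mem_rowLattice hv.mem hv.ne_zero
    exact one_le_mul_of_one_le_of_one_le (one_le_mul_of_one_le_of_one_le hN hheight)
      (one_le_pow₀ hnorm)
  have hpolar : Q.polarBilin v ≠ 0 := polarBilin_euclideanForm_ne_zero (hA.map _)
    (by rwa [← Int.cast_det, Int.cast_ne_zero]) hv.ne_zero
  obtain ⟨b, hbv, hbL, hbQ, hbound⟩ :=
    hv.exists_basis_isotropic hQL hQK hKv hpolar finrank_euclideanSpace i₀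
  choose x hxB hxb using fun k ↦ mem_rowLattice_iff.1 (hbL k)
  refine ⟨x, linearIndependent_of_intToEuclidean ?_, hxB, fun k ↦ ?_, fun k hk ↦ ?_⟩
  · simpa only [hxb] using b.linearIndependent
  · exact_mod_cast (hQ (x k)).symm.trans (hxb k ▸ hbQ k)
  · calc (supNorm (x i₀) : ℝ) * supNorm (x k)
        ≤ ‖intToEuclidean (x i₀)‖ * ‖intToEuclidean (x k)‖ := by
          gcongr <;> exact supNorm_le_norm_intToEuclidean _
      _ ≤ _ := by
        rw [hxb, hxb, hbv]
        simpa only [finrank_euclideanSpace_fin, covolume_rowLattice hB] using hbound k hk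

lemma pow_card_mul_prod_le_pow_card {ι : Type*} {s : Finset ι} {f : ι → ℝ} {a c : ℝ} (ha : 0 ≤ a)
    (hf : ∀ i ∈ s, 0 ≤ f i) (hfc : ∀ i ∈ s, a * f i ≤ c) :
    a ^ s.card * ∏ i ∈ s, f i ≤ c ^ s.card := by
  rw [← Finset.prod_const, ← Finset.prod_mul_distrib, ← Finset.prod_const]
  exact Finset.prod_le_prod (fun i hi ↦ mul_nonneg ha (hf i hi)) hfc

/-- **Schulze-Pillot (general lattices).** For every `N ≥ 2` there is a constant `C_N` such
that: if `F` is a nonsingular integral quadratic form in `N` variables and `Λ ⊆ ℤ^N` is a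
full-rank sublattice containing a nonzero zero of `F`, then there are `N` linearly independent
zeros `x_1, …, x_N ∈ Λ` of `F` with
`|x_1|^(N−1) · |x_2| ⋯ |x_N| ≤ C_N · |F|^((N−1)²) · det(Λ)^(2(N−1))`. -/
theorem schulze_pillot_lattice (N : ℕ) (hN : 2 ≤ N) :
    ∃ C : ℝ, 0 < C ∧
      ∀ (f : Fin N → Fin N → ℤ), (∀ i j, f i j = f j i) →
      (Matrix.of f).det ≠ 0 →
      ∀ B : Matrix (Fin N) (Fin N) ℤ, B.det ≠ 0 →
      (∃ x : Fin N → ℤ, memLattice B x ∧ x ≠ 0 ∧ ∑ i, ∑ j, f i j * x i * x j = 0) →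
      ∃ x : Fin N → (Fin N → ℤ), LinearIndependent ℤ x ∧
        (∀ k, memLattice B (x k)) ∧
        (∀ k, ∑ i, ∑ j, f i j * x k i * x k j = 0) ∧
        (supNorm (x ⟨0, by omega⟩) : ℝ) ^ (N - 1) *
          (∏ k ∈ Finset.univ.erase (⟨0, by omega⟩ : Fin N), (supNorm (x k) : ℝ)) ≤
          C * ((Finset.univ.sup fun p : Fin N × Fin N => (f p.1 p.2).natAbs : ℕ) : ℝ) ^
            ((N - 1) ^ 2) * |(B.det : ℝ)| ^ (2 * (N - 1)) := by
  refine ⟨(96 * N * (6 * N ^ 2) ^ (N - 2)) ^ (N - 1), by positivity, ?_⟩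
  intro f hsymm hdet B hB hex
  obtain ⟨x, hindep, hxB, hxf, hbound⟩ := exists_linearIndependent_isotropic
    (A := Matrix.of f) ⟨0, by omega⟩ (Matrix.IsSymm.ext fun i j ↦ hsymm j i) hdet hB hex
  refine ⟨x, hindep, hxB, hxf, ?_⟩
  have hprod := pow_card_mul_prod_le_pow_card (s := Finset.univ.erase ⟨0, by omega⟩)
    (Nat.cast_nonneg _) (fun k _ ↦ Nat.cast_nonneg _)
    fun k hk ↦ hbound k (Finset.ne_of_mem_erase hk)
  rw [Finset.card_erase_of_mem (Finset.mem_univ _), Finset.card_univ, Fintype.card_fin] at hprod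
  refine hprod.trans_eq ?_
  have hexp : (N - 1) ^ 2 = (N - 1) * (1 + (N - 2)) := by rw [pow_two]; congr; omega
  rw [hexp]
  change _ = _ * (matrixHeight (Matrix.of f) : ℝ) ^ _ * _
  ring
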